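/- arXiv:2405.16660 — 2 statements merged into one kernel-verified Lean document; each statement's English description precedes it below -/
import Mathlib

section
/- For every integer n ≥ 3, the number of sequences s ∈ {H,T}^n in which the number of occurrences of the consecutive pattern HT strictly exceeds the number of occurrences of the consecutive pattern HH is strictly greater than the number of sequences in which the occurrences of HH strictly exceed those of HT. Equivalently, Δ_n > 0 for all n ≥ 3, i.e. for a fair coin flipped n ≥ 3 times, Bob (who scores a point per HT) is strictly more likely than Alice (who scores a point per HH) to have the higher score. -/
/-!
Let `S n` be the number of sequences won by Bob minus the number won by Alice, among sequences of
length `n + 1`, and write `A`, `B` for the two scores. The exact formula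
`S n = #{s | s ends in H and B s = A s + 1}` holds, and the right-hand side is visibly positive
for length at least three (`HT⋯TH` is such a sequence).

Call the right-hand side `v n`, and let `u n` count the sequences ending in `H` with `A = B + 1`.
* Appending a flip changes the scores only after an `H`, and then it moves `B - A` by `+1` or `-1`.
  Hence the sign of `B - A` contributes `S (n+1) = 2 * S n + u n - v n`: only the sequences ending
  in `H` with `|B - A| = 1` matter, as those with `B = A` contribute symmetrically.
* The number of sequences of length `n + 1` ending in `H` with `A = a` and `B = b` is
  `C(a+b, b) * C(n-a-b, b)` (`count_closed_form`), so Pascal's rule and the symmetry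
  `C(2a+1, a) = C(2a+1, a+1)` give `v (n+1) = v n + u n`, even for each value of `a` separately.

Together these give `S n = v n` by induction, and `v` is nondecreasing with `v 2 = 1`.
-/

/-- Bob's score: number of indices `i < n-1` with `s i = H` and `s (i+1) = T`
    (`true` = heads). -/
def bobScore {n : ℕ} (s : Fin n → Bool) : ℕ :=
  (Finset.univ.filter (fun i : Fin (n - 1) =>
    s ⟨i.1, lt_of_lt_of_le i.2 (Nat.sub_le n 1)⟩ = true ∧
    s ⟨i.1 + 1, Nat.add_lt_of_lt_sub i.2⟩ = false)).card

/-- Alice's score: number of indices `i < n-1` with `s i = H` and `s (i+1) = H`. -/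
def aliceScore {n : ℕ} (s : Fin n → Bool) : ℕ :=
  (Finset.univ.filter (fun i : Fin (n - 1) =>
    s ⟨i.1, lt_of_lt_of_le i.2 (Nat.sub_le n 1)⟩ = true ∧
    s ⟨i.1 + 1, Nat.add_lt_of_lt_sub i.2⟩ = true)).card

/-- Number of length-`n` coin sequences where Bob's score strictly exceeds Alice's. -/
def cB (n : ℕ) : ℕ :=
  (Finset.univ.filter (fun s : Fin n → Bool => aliceScore s < bobScore s)).card

/-- Number of length-`n` coin sequences where Alice's score strictly exceeds Bob's. -/
def cA (n : ℕ) : ℕ :=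
  (Finset.univ.filter (fun s : Fin n → Bool => bobScore s < aliceScore s)).card

/-- The sum, over all sequences of length `n + 1`, of a weight that depends only on the last flip,
Alice's score and Bob's score (in this order). -/
def total (n : ℕ) (φ : Bool → ℕ → ℕ → ℤ) : ℤ :=
  ∑ s : Fin (n + 1) → Bool, φ (s (Fin.last n)) (aliceScore s) (bobScore s)

/-- The adjoint of appending one flip: the sum of the weights of the two extensions of a sequence
with given last flip and scores. -/
def step (φ : Bool → ℕ → ℕ → ℤ) : Bool → ℕ → ℕ → ℤ := fun x a b =>
  if x then φ true (a + 1) b + φ false a (b + 1) else φ true a b + φ false a b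

lemma bobScore_snoc {n : ℕ} (s : Fin (n + 1) → Bool) (x : Bool) :
    bobScore (Fin.snoc s x : Fin (n + 2) → Bool) =
      bobScore s + if s (Fin.last n) = true ∧ x = false then 1 else 0 := by
  unfold bobScore
  rw [Finset.card_filter, Finset.card_filter]
  change (∑ i : Fin (n + 1), _) = (∑ i : Fin n, _) + _
  rw [Fin.sum_univ_castSucc]
  congr 1
  · refine Finset.sum_congr rfl fun i _ => ?_
    have h1 := i.2
    simp [Fin.snoc, Nat.lt_succ_of_lt h1]
  · simp [Fin.snoc, Fin.last]

lemma aliceScore_snoc {n : ℕ} (s : Fin (n + 1) → Bool) (x : Bool) :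
    aliceScore (Fin.snoc s x : Fin (n + 2) → Bool) =
      aliceScore s + if s (Fin.last n) = true ∧ x = true then 1 else 0 := by
  unfold aliceScore
  rw [Finset.card_filter, Finset.card_filter]
  change (∑ i : Fin (n + 1), _) = (∑ i : Fin n, _) + _
  rw [Fin.sum_univ_castSucc]
  congr 1
  · refine Finset.sum_congr rfl fun i _ => ?_
    have h1 := i.2
    simp [Fin.snoc, Nat.lt_succ_of_lt h1]
  · simp [Fin.snoc, Fin.last]

lemma aliceScore_le {n : ℕ} (s : Fin (n + 1) → Bool) : aliceScore s ≤ n := by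
  unfold aliceScore
  exact (Finset.card_filter_le _ _).trans (by simp)

lemma total_succ (n : ℕ) (φ : Bool → ℕ → ℕ → ℤ) : total (n + 1) φ = total n (step φ) := by
  unfold total
  rw [← (Fin.snocEquiv (fun _ : Fin (n + 2) => Bool)).sum_comp, Fintype.sum_prod_type_right]
  refine Finset.sum_congr rfl fun s _ => ?_
  change (∑ x : Bool, φ ((Fin.snoc s x : Fin (n + 2) → Bool) (Fin.last (n + 1)))
    (aliceScore (Fin.snoc s x : Fin (n + 2) → Bool))
    (bobScore (Fin.snoc s x : Fin (n + 2) → Bool))) = _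
  simp only [bobScore_snoc, aliceScore_snoc, Fin.snoc_last, Fintype.sum_bool, step]
  cases s (Fin.last n) <;> simp

lemma total_zero (φ : Bool → ℕ → ℕ → ℤ) : total 0 φ = φ true 0 0 + φ false 0 0 := by
  unfold total
  rw [← (Equiv.funUnique (Fin 1) Bool).symm.sum_comp]
  simp [aliceScore, bobScore]

lemma total_add (n : ℕ) (φ ψ : Bool → ℕ → ℕ → ℤ) :
    total n (fun x a b => φ x a b + ψ x a b) = total n φ + total n ψ := by
  simp [total, Finset.sum_add_distrib]

lemma total_sub (n : ℕ) (φ ψ : Bool → ℕ → ℕ → ℤ) :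
    total n (fun x a b => φ x a b - ψ x a b) = total n φ - total n ψ := by
  simp [total, Finset.sum_sub_distrib]

/-- The indicator of last flip `x`, Alice's score `a` and Bob's score `b`. -/
def ind (x : Bool) (a b : ℕ) : Bool → ℕ → ℕ → ℤ := fun y a' b' =>
  if y = x ∧ a' = a ∧ b' = b then 1 else 0

/-- The closed form of the number of sequences of length `n + 1` with Alice's score `a` and
Bob's score `b`, ending in `H` and in `T` respectively. In the second formula the truncated
`a + b - 1` gives the correct value also for `b = 0`: one (the all-`T` sequence) if `a = 0`,
and zero otherwise. -/
lemma count_closed_form (n a b : ℕ) :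
    total n (ind true a b) =
      (if a + b ≤ n then (((a + b).choose b * (n - (a + b)).choose b : ℕ) : ℤ) else 0) ∧
    total n (ind false a b) = (((a + b - 1).choose a * (n + 1 - (a + b)).choose b : ℕ) : ℤ) := by
  induction n generalizing a b with
  | zero =>
    rw [total_zero, total_zero]
    rcases a with _ | a <;> rcases b with _ | b <;> simp [ind]
    right
    rw [Nat.choose_eq_zero_iff]
    omega
  | succ n ih =>
    rw [total_succ, total_succ]
    constructor
    · rcases a with _ | a
      · have e : step (ind true 0 b) = ind false 0 b := by
          funext x a' b'
          cases x <;> simp [step, ind]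
        rw [e, (ih 0 b).2]
        split_ifs with h
        · simp
        · rw [show n + 1 - (0 + b) = 0 by omega, Nat.choose_eq_zero_of_lt (by omega : 0 < b)]
          simp
      · have e : step (ind true (a + 1) b) =
            fun x a' b' => ind true a b x a' b' + ind false (a + 1) b x a' b' := by
          funext x a' b'
          cases x <;> simp [step, ind]
        rw [e, total_add, (ih a b).1, (ih (a + 1) b).2]
        have e1 : n + 1 - (a + 1 + b) = n - (a + b) := by omega
        have e2 : a + 1 + b - 1 = a + b := by omega
        rw [e1, e2]
        by_cases h : a + b ≤ n
        · rw [if_pos h, if_pos (by omega)]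
          have e3 : (a + 1 + b).choose b = (a + b).choose b + (a + b).choose (a + 1) := by
            rw [← Nat.choose_symm_add, show a + 1 + b = (a + b) + 1 by omega,
              Nat.choose_succ_succ, Nat.choose_symm_add]
          rw [e3]
          push_cast
          ring
        · rw [if_neg h, if_neg (by omega), Nat.sub_eq_zero_of_le (by omega)]
          rcases b with _ | b <;> simp
    · rcases b with _ | b
      · have e : step (ind false a 0) = ind false a 0 := by
          funext x a' b'
          cases x <;> simp [step, ind]
        rw [e, (ih a 0).2]
        simp
      · have e : step (ind false a (b + 1)) =
            fun x a' b' => ind false a (b + 1) x a' b' + ind true a b x a' b' := by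
          funext x a' b'
          cases x <;> simp [step, ind]
        rw [e, total_add, (ih a (b + 1)).2, (ih a b).1]
        have e1 : n + 1 - (a + (b + 1)) = n - (a + b) := by omega
        have e2 : a + (b + 1) - 1 = a + b := by omega
        rw [e1, e2]
        by_cases h : a + b ≤ n
        · rw [if_pos h, show n + 1 + 1 - (a + (b + 1)) = (n - (a + b)) + 1 by omega,
            Nat.choose_succ_succ, Nat.choose_symm_add]
          push_cast
          ring
        · rw [if_neg h, Nat.sub_eq_zero_of_le (by omega : n ≤ a + b),
            Nat.sub_eq_zero_of_le (by omega)]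
          simp

/-- The weight of the sequences ending in `H` in which Bob is one point ahead. -/
def bobAhead : Bool → ℕ → ℕ → ℤ := fun x a b => if x = true ∧ b = a + 1 then 1 else 0

/-- The weight of the sequences ending in `H` in which Alice is one point ahead. -/
def aliceAhead : Bool → ℕ → ℕ → ℤ := fun x a b => if x = true ∧ a = b + 1 then 1 else 0

/-- The sign of Bob's score minus Alice's score. -/
def winner : Bool → ℕ → ℕ → ℤ := fun _ a b => (if a < b then 1 else 0) - if b < a then 1 else 0

/-- Any `M > n` works because Alice's score is at most `n`. -/
lemma total_bobAhead_eq_sum (n M : ℕ) (hM : n < M) :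
    total n bobAhead = ∑ i ∈ Finset.range M, total n (ind true i (i + 1)) := by
  unfold total
  rw [Finset.sum_comm]
  refine Finset.sum_congr rfl fun s _ => ?_
  have := aliceScore_le s
  rw [Finset.sum_eq_single (aliceScore s)]
  · simp [bobAhead, ind]
  · intro i _ hi
    simp [ind, hi.symm]
  · intro h
    exact absurd (Finset.mem_range.2 (by omega)) h

lemma total_aliceAhead_eq_sum (n M : ℕ) (hM : n < M) :
    total n aliceAhead = ∑ i ∈ Finset.range M, total n (ind true (i + 1) i) := by
  unfold total
  rw [Finset.sum_comm]
  refine Finset.sum_congr rfl fun s _ => ?_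
  have := aliceScore_le s
  by_cases h : aliceScore s = bobScore s + 1
  · rw [Finset.sum_eq_single (bobScore s)]
    · simp [aliceAhead, ind]
    · intro i _ hi
      simp [ind, hi.symm]
    · intro h
      exact absurd (Finset.mem_range.2 (by omega)) h
  · rw [Finset.sum_eq_zero]
    · simp [aliceAhead, h]
    · intro i _
      rw [ind, if_neg]
      rintro ⟨-, h1, h2⟩
      omega

lemma total_bobAhead_succ (n : ℕ) :
    total (n + 1) bobAhead = total n bobAhead + total n aliceAhead := by
  rw [total_bobAhead_eq_sum (n + 1) (n + 2) (by omega),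
    total_bobAhead_eq_sum n (n + 2) (by omega), total_aliceAhead_eq_sum n (n + 2) (by omega),
    ← Finset.sum_add_distrib]
  refine Finset.sum_congr rfl fun i _ => ?_
  rw [(count_closed_form _ _ _).1, (count_closed_form _ _ _).1, (count_closed_form _ _ _).1]
  have hs : (i + (i + 1)).choose (i + 1) = (i + 1 + i).choose i := by
    rw [← Nat.choose_symm_add, Nat.add_comm i (i + 1)]
  rw [hs, Nat.add_comm i (i + 1)]
  by_cases h : i + 1 + i ≤ n
  · rw [if_pos h, if_pos h, if_pos (by omega),
      show n + 1 - (i + 1 + i) = (n - (i + 1 + i)) + 1 by omega, Nat.choose_succ_succ]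
    push_cast
    ring
  · rw [if_neg h, if_neg h]
    split_ifs with h'
    · rw [show n + 1 - (i + 1 + i) = 0 by omega]
      simp
    · simp

lemma total_winner_succ (n : ℕ) :
    total (n + 1) winner = total n winner + total n winner
      + total n aliceAhead - total n bobAhead := by
  rw [total_succ, ← total_add, ← total_add, ← total_sub]
  congr 1
  funext x a b
  cases x
  · simp [step, winner, aliceAhead, bobAhead]
  · simp only [step, winner, aliceAhead, bobAhead, if_true, true_and]
    split_ifs <;> omega

/-- Bob's lead in winning sequences is exactly the number of sequences ending in `H` in which he is
one point ahead. -/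
lemma total_winner_eq (n : ℕ) : total n winner = total n bobAhead := by
  induction n with
  | zero => simp [total_zero, winner, bobAhead]
  | succ n ih =>
    rw [total_winner_succ, total_bobAhead_succ, ih]
    ring

lemma total_bobAhead_pos (n : ℕ) : 0 < total (n + 2) bobAhead := by
  induction n with
  | zero => simp [total_succ, total_zero, step, bobAhead]
  | succ n ih =>
    have h : 0 ≤ total (n + 2) aliceAhead :=
      Finset.sum_nonneg fun s _ => by unfold aliceAhead; split_ifs <;> simp
    rw [show n + 1 + 2 = (n + 2) + 1 by omega, total_bobAhead_succ]
    omega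

lemma cB_sub_cA (n : ℕ) : (cB (n + 1) : ℤ) - cA (n + 1) = total n winner := by
  simp [cB, cA, total, winner, Finset.sum_sub_distrib]

/-- For every `n ≥ 3`, strictly more sequences favor Bob (pattern `HT`)
    than favor Alice (pattern `HH`); equivalently `Δ_n > 0`. -/
theorem bob_beats_alice (n : ℕ) (hn : 3 ≤ n) : cA n < cB n := by
  obtain ⟨m, rfl⟩ : ∃ m, n = m + 2 + 1 := ⟨n - 3, by omega⟩
  have h := cB_sub_cA (m + 2)
  rw [total_winner_eq] at h
  have := total_bobAhead_pos m
  omega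
end

section
/- Define integers e_n = 2·(c_B(n) − c_A(n)) + 1 for n ≥ 0, and let E = Σ_{n≥0} e_n X^n ∈ ℚ⟦X⟧. Then E satisfies the linear differential equation (4X⁴ − 4X³ + X² − 2X + 1)·E′ + (8X³ − 6X² + X − 1)·E = 0 in the ring of formal power series, where E′ denotes the formal derivative. -/
/-!
The series is `E = D ^ (-1/2)` with `D = 4X⁴ - 4X³ + X² - 2X + 1 = (1 - X)(1 - X - 4X³)`, so that
differentiating `D * E ^ 2 = 1` (`sq_mul_mk_e`) and cancelling `2 * E` gives the equation
`D * E' + (1/2) * D' * E = 0`.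

The identity `D * E ^ 2 = 1` comes from the kernel method. Let `d` be the current lead of Bob and
`b` the last coin, and let `signSeries b d` be the generating function, over the number of further
flips, of the sum of the signs of the final lead. Conditioning on the next flip and eliminating the
states with last coin `H` yields a three-term recurrence in `d` for `signSeries false d`
(`signSeries_rec`). Its coefficients other than that of the term in `d` are divisible by `X`, so it
has only one solution in power series indexed by `ℤ` (`eq_zero_of_rec`). That solution is found
explicitly in `signSeries_zero`: on either side of `d = 0` it is a constant `±(1 - 2X)⁻¹` plus a
multiple of a geometric sequence. The ratios of these sequences are expressed through the series
`M = 1 + X³ (1 - X)⁻¹ M²`, obtained from the Catalan series by substitution (`exists_root`), and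
`1 - X - 2 X³ M` is a square root of `D`.
-/

open PowerSeries

/-- `e_n = 2 (c_B(n) - c_A(n)) + 1`, as a rational number. -/
def e (n : ℕ) : ℚ := 2 * ((cB n : ℚ) - (cA n : ℚ)) + 1


lemma bobScore_cons {n : ℕ} (b : Bool) (s : Fin (n + 1) → Bool) :
    bobScore (Fin.cons b s : Fin (n + 2) → Bool) =
      (if b = true ∧ s 0 = false then 1 else 0) + bobScore s := by
  unfold bobScore
  rw [Finset.card_filter, Finset.card_filter]
  exact Fin.sum_univ_succ (n := n) _

lemma aliceScore_cons {n : ℕ} (b : Bool) (s : Fin (n + 1) → Bool) :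
    aliceScore (Fin.cons b s : Fin (n + 2) → Bool) =
      (if b = true ∧ s 0 = true then 1 else 0) + aliceScore s := by
  unfold aliceScore
  rw [Finset.card_filter, Finset.card_filter]
  exact Fin.sum_univ_succ (n := n) _

/-- Sum, over all sequences of `n` further flips, of the sign of Bob's final lead, when Bob
currently leads by `d` and the last coin was `b`. A preceding `T` scores nothing, so `b = false`
also stands for the start of the game. -/
def signSum (b : Bool) (d : ℤ) (n : ℕ) : ℚ :=
  ∑ s : Fin n → Bool, (((d + bobScore (Fin.cons b s : Fin (n + 1) → Bool)
    - aliceScore (Fin.cons b s : Fin (n + 1) → Bool)).sign : ℤ) : ℚ)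

lemma signSum_zero (b : Bool) (d : ℤ) : signSum b d 0 = (d.sign : ℚ) := by
  simp [signSum, bobScore, aliceScore]

lemma signSum_succ (b : Bool) (d : ℤ) (n : ℕ) :
    signSum b d (n + 1) =
      signSum false (d + if b then 1 else 0) n + signSum true (d - if b then 1 else 0) n := by
  unfold signSum
  rw [← (Fin.consEquiv (fun _ : Fin (n + 1) => Bool)).sum_comp, Fintype.sum_prod_type,
    Fintype.sum_bool, add_comm]
  congr 1 <;> refine Finset.sum_congr rfl fun s _ => ?_ <;>
    rw [show ∀ x, (Fin.consEquiv fun _ : Fin (n + 1) => Bool) (x, s) = Fin.cons x s from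
      fun _ => rfl, bobScore_cons, aliceScore_cons] <;>
    cases b <;> simp <;> ring_nf

lemma e_eq (n : ℕ) : e n = 2 * signSum false 0 n + 1 := by
  have h : (cB n : ℚ) - cA n = signSum false 0 n := by
    unfold cB cA signSum
    rw [Finset.card_filter, Finset.card_filter]
    push_cast
    rw [← Finset.sum_sub_distrib]
    refine Finset.sum_congr rfl fun s _ => ?_
    have hs : bobScore (Fin.cons false s : Fin (n + 1) → Bool) = bobScore s ∧
        aliceScore (Fin.cons false s : Fin (n + 1) → Bool) = aliceScore s := by
      cases n with
      | zero => simp [bobScore, aliceScore]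
      | succ n => simp [bobScore_cons, aliceScore_cons]
    rw [hs.1, hs.2]
    rcases lt_trichotomy (bobScore s) (aliceScore s) with h | h | h
    · rw [Int.sign_eq_neg_one_of_neg (by omega)]
      simp [h, h.not_gt]
    · simp [h]
    · rw [Int.sign_eq_one_of_pos (by omega)]
      simp [h, h.not_gt]
  rw [e, h]

/-- Generating function of `signSum b d` over the number of further flips. -/
noncomputable def signSeries (b : Bool) (d : ℤ) : ℚ⟦X⟧ := PowerSeries.mk (signSum b d)

/-- Conditioning on the next flip. -/
lemma signSeries_eq (b : Bool) (d : ℤ) :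
    signSeries b d = C (d.sign : ℚ) + X * (signSeries false (d + if b then 1 else 0) +
      signSeries true (d - if b then 1 else 0)) := by
  ext n
  cases n with
  | zero => simp [signSeries, signSum_zero]
  | succ n =>
    rw [map_add, coeff_C, if_neg n.succ_ne_zero, coeff_succ_X_mul]
    simp [signSeries, signSum_succ]

/-- The three-term recurrence in `d` left after eliminating `signSeries true` from
`signSeries_eq`. -/
lemma signSeries_rec (d : ℤ) :
    (1 - X) * signSeries false d = X ^ 2 * signSeries false (d + 1) +
      X * (1 - X) * signSeries false (d - 1) +
      (1 + X) * C (d.sign : ℚ) - X * C ((d - 1).sign : ℚ) := by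
  have h1 := signSeries_eq false d
  have h2 := signSeries_eq true d
  have h3 := signSeries_eq false (d - 1)
  simp only [Bool.false_eq_true, if_false, if_true, add_zero, sub_zero] at h1 h2 h3
  linear_combination h1 + X * h2 - X * h3

/-- The homogeneous recurrence has only the zero solution: as `1 - X` is a unit and the right side
carries a factor `X`, every power of `X` divides every `F d`. No growth condition in `d` is
needed. -/
lemma eq_zero_of_rec (F : ℤ → ℚ⟦X⟧)
    (h : ∀ d, (1 - X) * F d = X ^ 2 * F (d + 1) + X * (1 - X) * F (d - 1)) (d : ℤ) :
    F d = 0 := by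
  have key : ∀ n : ℕ, ∀ d, (X : ℚ⟦X⟧) ^ n ∣ F d := by
    intro n
    induction n with
    | zero => simp
    | succ n ih =>
      intro d
      obtain ⟨u, hu⟩ := ih d
      obtain ⟨v, hv⟩ := ih (d + 1)
      obtain ⟨w, hw⟩ := ih (d - 1)
      exact ⟨u + X * v + (1 - X) * w, by
        have := h d
        rw [hv, hw] at this
        linear_combination this + X * hu⟩
  ext m
  have := (X_pow_dvd_iff.1 (key (m + 1) d)) m (Nat.lt_succ_self m)
  simpa using this

/-- `M` is the Catalan series evaluated at `X ^ 3 / (1 - X)`. -/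
lemma exists_root : ∃ M : ℚ⟦X⟧, constantCoeff M = 1 ∧ (1 - X) * M = (1 - X) + X ^ 3 * M ^ 2 := by
  have hb : (1 - X : ℚ⟦X⟧) * (1 - X)⁻¹ = 1 := PowerSeries.mul_inv_cancel _ (by simp)
  have hs : HasSubst ((X : ℚ⟦X⟧) ^ 3 * (1 - X)⁻¹) :=
    HasSubst.of_constantCoeff_zero' (by simp)
  have h := congrArg (fun f => substAlgHom (R := ℚ) hs (PowerSeries.map (Nat.castRingHom ℚ) f))
    catalanSeries_sq_mul_X_add_one
  simp only [map_add, map_mul, map_pow, map_one, PowerSeries.map_X, substAlgHom_X] at h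
  set M := substAlgHom (R := ℚ) hs (PowerSeries.map (Nat.castRingHom ℚ) catalanSeries)
  refine ⟨M, ?_, ?_⟩
  · rw [← h]; simp
  · linear_combination (-(1 - X)) * h + X ^ 3 * M ^ 2 * hb

/-- The recurrence is solved by `(1 - 2X)⁻¹ - α μ ^ (d - 1)` for `d ≥ 1` and
`-(1 - 2X)⁻¹ + β ν ^ (-d)` for `d ≤ 0`, where `μ = X M` and `1 / ν`, with `ν = X² M / (1 - X)`, are
the roots of the kernel `X² t² - (1 - X) t + X (1 - X)`. The equations at `d = 1` and `d = 0`
determine `α` and `β`; the lemma records the value of `β`, cleared of denominators. -/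
lemma signSeries_zero {M : ℚ⟦X⟧} (hM0 : constantCoeff M = 1)
    (hM : (1 - X) * M = (1 - X) + X ^ 3 * M ^ 2) :
    (1 - X) * (2 - M) * (1 - 2 * X) * (signSeries false 0 + (1 - 2 * X)⁻¹) = 1 - X * M := by
  have hb : (1 - X : ℚ⟦X⟧) * (1 - X)⁻¹ = 1 := PowerSeries.mul_inv_cancel _ (by simp)
  have hc : (1 - 2 * X : ℚ⟦X⟧) * (1 - 2 * X)⁻¹ = 1 := PowerSeries.mul_inv_cancel _ (by simp)
  have hw : (2 - M) * (2 - M)⁻¹ = 1 :=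
    PowerSeries.mul_inv_cancel _ (by rw [map_sub, map_ofNat, hM0]; norm_num)
  have hM' : M ≠ 0 := by rintro rfl; simp at hM0
  have hZ : (1 - X) * (2 - M) * (1 - 2 * X) ≠ 0 :=
    mul_ne_zero (mul_ne_zero (left_ne_zero_of_mul_eq_one hb) (left_ne_zero_of_mul_eq_one hw))
      (left_ne_zero_of_mul_eq_one hc)
  set c : ℚ⟦X⟧ := (1 - 2 * X)⁻¹
  set b' : ℚ⟦X⟧ := (1 - X)⁻¹
  set w := (2 - M)⁻¹
  obtain ⟨α, hα⟩ : ∃ α, (1 - X) * (2 - M) * (1 - 2 * X) * α = X * M * (1 - (1 - X) * M) :=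
    ⟨X * M * (1 - (1 - X) * M) * (b' * w * c), by
      linear_combination X * M * (1 - (1 - X) * M) *
        ((2 - M) * w * ((1 - 2 * X) * c) * hb + (1 - 2 * X) * c * hw + hc)⟩
  obtain ⟨β, hβ⟩ : ∃ β, (1 - X) * (2 - M) * (1 - 2 * X) * β = 1 - X * M :=
    ⟨(1 - X * M) * (b' * w * c), by
      linear_combination (1 - X * M) *
        ((2 - M) * w * ((1 - 2 * X) * c) * hb + (1 - 2 * X) * c * hw + hc)⟩
  -- The matching conditions for the two half-line solutions, at `d = 1` and `d = 0`.
  have e1 : ((1 - X) - X ^ 3 * M) * α + X * (1 - X) * β = X * c := by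
    apply mul_left_cancel₀ hZ
    linear_combination ((1 - X) - X ^ 3 * M) * hα + X * (1 - X) * hβ +
      X * (1 - (1 - X) * M) * hM - X * (1 - X) * (2 - M) * hc
  have e2 : X ^ 2 * α + ((1 - X) - X ^ 3 * M) * β = c * (1 - X) := by
    apply mul_left_cancel₀ hZ
    apply mul_left_cancel₀ hM'
    linear_combination M * X ^ 2 * hα + M * ((1 - X) - X ^ 3 * M) * hβ +
      (1 - X * M) * hM - (1 - (1 - X) * M) * hM - (1 - X) ^ 2 * (2 - M) * M * hc
  have hν : (1 - X) * (X ^ 2 * M * b') = X ^ 2 + X * (1 - X) * (X ^ 2 * M * b') ^ 2 := by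
    apply mul_left_cancel₀ (left_ne_zero_of_mul_eq_one hb)
    linear_combination X ^ 2 * hM +
      ((1 - X) * X ^ 2 * M - X ^ 5 * M ^ 2 * ((1 - X) * b' + 1)) * hb
  set ν := X ^ 2 * M * b' with hνdef
  have hν' : (1 - X) * ν = X ^ 2 * M := by linear_combination X ^ 2 * M * hb
  let G : ℤ → ℚ⟦X⟧ := fun d =>
    if 0 < d then c - α * (X * M) ^ (d - 1).toNat else -c + β * ν ^ (-d).toNat
  have hGpos : ∀ k : ℕ, G (k + 1) = c - α * (X * M) ^ k := fun k => by
    simp only [G]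
    rw [if_pos (by omega), show ((k : ℤ) + 1 - 1).toNat = k by omega]
  have hGneg : ∀ k : ℕ, G (-k) = -c + β * ν ^ k := fun k => by
    simp only [G]
    rw [if_neg (by omega), show (-(-(k : ℤ))).toNat = k by omega]
  have hG : ∀ d, (1 - X) * G d = X ^ 2 * G (d + 1) + X * (1 - X) * G (d - 1) +
      (1 + X) * C (d.sign : ℚ) - X * C ((d - 1).sign : ℚ) := by
    intro d
    have hcases : (∃ k : ℕ, d = k + 2) ∨ d = 1 ∨ d = 0 ∨ ∃ k : ℕ, d = -(k + 1) := by
      rcases lt_or_ge d 0 with h | h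
      · exact Or.inr (Or.inr (Or.inr ⟨(-d - 1).toNat, by omega⟩))
      · rcases lt_or_ge d 2 with h' | h'
        · omega
        · exact Or.inl ⟨(d - 2).toNat, by omega⟩
    rcases hcases with ⟨k, rfl⟩ | rfl | rfl | ⟨k, rfl⟩
    · have g0 := hGpos k
      have g1 := hGpos (k + 1)
      have g2 := hGpos (k + 2)
      push_cast at g1 g2
      rw [show (k : ℤ) + 2 - 1 = k + 1 by ring, show (k : ℤ) + 2 + 1 = k + 2 + 1 by ring,
        show (k : ℤ) + 2 = k + 1 + 1 by ring, g1, g0,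
        show (k : ℤ) + 1 + 1 + 1 = k + 2 + 1 by ring, g2,
        Int.sign_eq_one_of_pos (by omega), Int.sign_eq_one_of_pos (by omega)]
      simp only [Int.cast_one, map_one]
      linear_combination hc - α * (X * M) ^ k * X * hM
    · have g0 := hGneg 0
      have g1 := hGpos 0
      have g2 := hGpos 1
      norm_num at g0 g1 g2 ⊢
      rw [g0, g1, g2]
      linear_combination hc - e1 + X * hc
    · have g0 := hGneg 0
      have g1 := hGpos 0
      have g2 := hGneg 1
      norm_num at g0 g1 g2 ⊢
      rw [g0, g1, g2]
      linear_combination X * hc + e2 - X * β * hν'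
    · have g0 := hGneg k
      have g1 := hGneg (k + 1)
      have g2 := hGneg (k + 2)
      push_cast at g1 g2
      rw [show -((k : ℤ) + 1) - 1 = -(k + 2) by ring, show -((k : ℤ) + 1) + 1 = -k by ring,
        g0, g1, g2, Int.sign_eq_neg_one_of_neg (by omega), Int.sign_eq_neg_one_of_neg (by omega)]
      simp only [Int.cast_neg, Int.cast_one, map_neg, map_one]
      linear_combination - hc + β * ν ^ k * hν
  have hF := eq_zero_of_rec (fun d => signSeries false d - G d)
    (fun d => by linear_combination signSeries_rec d - hG d) 0
  have g0 := hGneg 0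
  norm_num at g0 hF
  rw [g0] at hF
  linear_combination (1 - X) * (2 - M) * (1 - 2 * X) * hF + hβ

lemma mk_e_eq : PowerSeries.mk e = 2 * signSeries false 0 + (1 - X)⁻¹ := by
  have hb : (1 - X : ℚ⟦X⟧) * (1 - X)⁻¹ = 1 := PowerSeries.mul_inv_cancel _ (by simp)
  have h1 : (1 - X : ℚ⟦X⟧) * PowerSeries.mk 1 = 1 := by
    rw [mul_comm]; exact PowerSeries.mk_one_mul_one_sub_eq_one ℚ
  rw [← mul_left_cancel₀ (left_ne_zero_of_mul_eq_one hb) (h1.trans hb.symm),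
    two_mul]
  ext n
  simp [signSeries, e_eq, two_mul]

/-- `E` is the inverse of the square root `1 - X - 2 X³ M` of `D`. -/
lemma sq_mul_mk_e :
    (4 * (X : ℚ⟦X⟧) ^ 4 - 4 * X ^ 3 + X ^ 2 - 2 * X + 1) * PowerSeries.mk e ^ 2 = 1 := by
  obtain ⟨M, hM0, hM⟩ := exists_root
  have hb : (1 - X : ℚ⟦X⟧) * (1 - X)⁻¹ = 1 := PowerSeries.mul_inv_cancel _ (by simp)
  have hc : (1 - 2 * X : ℚ⟦X⟧) * (1 - 2 * X)⁻¹ = 1 := PowerSeries.mul_inv_cancel _ (by simp)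
  have hw : (2 - M) * (2 - M)⁻¹ = 1 :=
    PowerSeries.mul_inv_cancel _ (by rw [map_sub, map_ofNat, hM0]; norm_num)
  have hZ : (1 - X) * (2 - M) ≠ 0 :=
    mul_ne_zero (left_ne_zero_of_mul_eq_one hb) (left_ne_zero_of_mul_eq_one hw)
  have hE : (1 - X) * (2 - M) * PowerSeries.mk e = M := by
    apply mul_left_cancel₀ (left_ne_zero_of_mul_eq_one hc)
    rw [mk_e_eq]
    linear_combination 2 * signSeries_zero hM0 hM - 2 * (1 - X) * (2 - M) * hc +
      (1 - 2 * X) * (2 - M) * hb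
  have hs : ((1 - X) - 2 * X ^ 3 * M) * M = (1 - X) * (2 - M) := by
    linear_combination 2 * hM
  have hD : (4 * (X : ℚ⟦X⟧) ^ 4 - 4 * X ^ 3 + X ^ 2 - 2 * X + 1) =
      ((1 - X) - 2 * X ^ 3 * M) ^ 2 := by
    linear_combination 4 * X ^ 3 * hM
  have hsE : ((1 - X) - 2 * X ^ 3 * M) * PowerSeries.mk e = 1 := by
    apply mul_left_cancel₀ hZ
    linear_combination ((1 - X) - 2 * X ^ 3 * M) * hE + hs
  rw [hD, ← mul_pow, hsE, one_pow]

/-- The generating function `E = Σ e_n Xⁿ ∈ ℚ⟦X⟧` satisfies the linear ODE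
    `(4X⁴ - 4X³ + X² - 2X + 1) E' + (8X³ - 6X² + X - 1) E = 0`. -/
theorem e_gen_fun_ode :
    (4 * (X : ℚ⟦X⟧) ^ 4 - 4 * X ^ 3 + X ^ 2 - 2 * X + 1) *
        PowerSeries.derivative ℚ (PowerSeries.mk e) +
      (8 * (X : ℚ⟦X⟧) ^ 3 - 6 * X ^ 2 + X - 1) * PowerSeries.mk e = 0 := by
  have h := sq_mul_mk_e
  set E := PowerSeries.mk e
  have hE : E ≠ 0 := by rintro h0; simp [h0] at h
  have hd := congrArg (PowerSeries.derivative ℚ) h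
  have d2 : PowerSeries.derivative ℚ (2 : ℚ⟦X⟧) = 0 := by
    rw [← map_ofNat (PowerSeries.C (R := ℚ)), PowerSeries.derivative_C]
  have d4 : PowerSeries.derivative ℚ (4 : ℚ⟦X⟧) = 0 := by
    rw [← map_ofNat (PowerSeries.C (R := ℚ)), PowerSeries.derivative_C]
  simp only [Derivation.leibniz, map_add, map_sub, smul_eq_mul, PowerSeries.derivative_pow,
    PowerSeries.derivative_X, Derivation.map_one_eq_zero, d2, d4] at hd
  norm_num at hd
  have h2 : (2 : ℚ⟦X⟧) ≠ 0 := fun h0 => by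
    have := congrArg constantCoeff h0
    rw [map_ofNat, map_zero] at this
    norm_num at this
  apply mul_left_cancel₀ (mul_ne_zero h2 hE)
  linear_combination hd
end
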